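/- Let G be an infinite, connected, locally finite, bipartite simple graph with vertex 2-coloring c (every edge joins a black vertex and a white vertex), such that every black vertex has degree exactly 3 and the group of color-preserving automorphisms of G acts with finitely many orbits on the vertices. Let G̃ be the simple graph whose vertex set is the disjoint union of the set of white vertices of G and the set of darts of G whose first vertex is black, where two distinct darts are adjacent if and only if they have the same (black) first vertex, and a dart (b,w) is adjacent to a white vertex w' if and only if w' = w. If σ_n(v)^{1/n} → μ as n → ∞ for some vertex v of G, and σ̃_n(x)^{1/n} → μ̃ as n → ∞ for some vertex x of G̃ (where σ̃ counts SAWs in G̃), then 1/μ² = (1/μ̃)³ + (1/μ̃)⁴. -/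

import Mathlib

open Filter

/-- The number of `n`-step self-avoiding walks in `G` starting at `v`. -/
noncomputable def sawCount {V : Type*} (G : SimpleGraph V) (v : V) (n : ℕ) : ℕ :=
  Nat.card {p : Σ w : V, G.Walk v w // p.2.IsPath ∧ p.2.length = n}

/-- The graph obtained from a bipartite graph `G` (with coloring `c`, black = `true`)
by applying the Fisher transformation at each black vertex.  Its vertices are the white
vertices of `G` together with the darts of `G` whose first vertex is black; two distinct
darts are adjacent iff they have the same first vertex, and a dart `(b, w)` is adjacent to
a white vertex `w'` iff `w' = w`. -/
def fisherBlack {V : Type*} (G : SimpleGraph V) (c : V → Bool) :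
    SimpleGraph ({v : V // c v = false} ⊕ {d : G.Dart // c d.toProd.1 = true}) :=
  SimpleGraph.fromRel (fun x y =>
    match x, y with
    | Sum.inr d, Sum.inr d' => d.1.toProd.1 = d'.1.toProd.1
    | Sum.inr d, Sum.inl w => d.1.toProd.2 = w.1
    | _, _ => False)

/-!
Let `pathSum G z ⊤ u X` be the generating function, at the weight `z` per step, of the
self-avoiding walks from `u` that avoid the set `X` of vertices visited before.  Decomposing by the
first step and crossing one black vertex at a time, a walk of `G` uses two steps to go from a white
vertex to another, at the cost `z ^ 2`, whereas in `fisherBlack G c` it goes through a triangle, in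
three or four steps, at the cost `z ^ 3 + z ^ 4`.  Hence the two generating functions, at `s` and
at `t`, should converge together when `s ^ 2 = t ^ 3 + t ^ 4`.

Walks correspond only approximately, because a walk may end inside a triangle, and a triangle that
has been crossed still has one corner left, where a walk can only end.  If
`s ^ 2 ≤ t ^ 3 + t ^ 4`, the generating function of `fisherBlack G c` dominates the one of `G` up
to a constant, so that its convergence is inherited by `G`.  If `t ^ 3 + t ^ 4 < s ^ 2`, the number
of these dead ends is at most the number of vertices visited before, and the strict inequality
absorbs a factor growing linearly with that number, so that convergence is inherited in the other
direction.
-/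

open scoped ENNReal NNReal Topology

theorem tsum_coe_eq_of_eq_triple {α M : Type*} [AddCommMonoid M] [TopologicalSpace M] {s : Set α}
    {a b d : α} (hab : a ≠ b) (had : a ≠ d) (hbd : b ≠ d) (hs : s = {a, b, d}) (f : α → M) :
    ∑' y : s, f y = f a + (f b + f d) := by
  classical
  have h : s = (({a, b, d} : Finset α) : Set α) := by simp [hs]
  rw [tsum_congr_set_coe f h, Finset.tsum_subtype', Finset.sum_insert (by simp [hab, had]),
    Finset.sum_pair hbd]

section PathSum

variable {V : Type*} {G : SimpleGraph V} {z : ℝ≥0∞} {n m : ℕ∞} {u v : V} {X : Set V}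

/-- The self-avoiding walks from `u` that visit no vertex of `X` and have fewer than `n` steps;
`n = ⊤` puts no restriction on the length. -/
def avoidingPaths (G : SimpleGraph V) (n : ℕ∞) (u : V) (X : Set V) : Set (Σ w : V, G.Walk u w) :=
  {p | p.2.IsPath ∧ (∀ y ∈ p.2.support, y ∉ X) ∧ (p.2.length : ℕ∞) < n}

/-- The generating function, at the weight `z` per step, of the self-avoiding walks in
`avoidingPaths G n u X`.  It takes values in `ℝ≥0∞`, so that it is defined without any convergence
requirement. -/
noncomputable def pathSum (G : SimpleGraph V) (z : ℝ≥0∞) (n : ℕ∞) (u : V) (X : Set V) : ℝ≥0∞ :=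
  ∑' p : avoidingPaths G n u X, z ^ p.1.2.length

theorem pathSum_eq_tsum_indicator :
    pathSum G z n u X =
      ∑' p, (avoidingPaths G n u X).indicator (fun p ↦ z ^ p.2.length) p :=
  tsum_subtype (avoidingPaths G n u X) fun p ↦ z ^ p.2.length

theorem avoidingPaths_of_mem (hu : u ∈ X) : avoidingPaths G n u X = ∅ :=
  Set.eq_empty_of_forall_notMem fun p hp ↦ hp.2.1 u p.2.start_mem_support hu

theorem pathSum_of_mem (hu : u ∈ X) : pathSum G z n u X = 0 := by
  simp [pathSum_eq_tsum_indicator, avoidingPaths_of_mem hu]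

theorem pathSum_zero : pathSum G z 0 u X = 0 := by
  simp [pathSum_eq_tsum_indicator, avoidingPaths]

theorem pathSum_mono (hnm : n ≤ m) : pathSum G z n u X ≤ pathSum G z m u X :=
  ENNReal.tsum_mono_subtype (fun p : Σ w : V, G.Walk u w ↦ z ^ p.2.length)
    fun _ hp ↦ ⟨hp.1, hp.2.1, hp.2.2.trans_le hnm⟩

theorem pathSum_top_eq_iSup : pathSum G z ⊤ u X = ⨆ n : ℕ, pathSum G z n u X := by
  refine le_antisymm ?_ (iSup_le fun n ↦ pathSum_mono le_top)
  rw [pathSum, ENNReal.tsum_eq_iSup_sum]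
  refine iSup_le fun s ↦ ?_
  let weight (p : Σ w : V, G.Walk u w) : ℝ≥0∞ := z ^ p.2.length
  let N := s.sup (fun p ↦ p.1.2.length) + 1
  have hN (p) (hp : p ∈ s) : p.1 ∈ avoidingPaths G N u X :=
    ⟨p.2.1, p.2.2.1, Nat.cast_lt.2 <| Nat.lt_succ_of_le <|
      Finset.le_sup (f := fun p : avoidingPaths G ⊤ u X ↦ p.1.2.length) hp⟩
  calc ∑ p ∈ s, weight p
      = ∑ p ∈ s, (avoidingPaths G N u X).indicator weight p :=
        Finset.sum_congr rfl fun p hp ↦ (Set.indicator_of_mem (hN p hp) weight).symm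
    _ ≤ ∑' p : avoidingPaths G ⊤ u X, (avoidingPaths G N u X).indicator weight p :=
        ENNReal.sum_le_tsum s
    _ ≤ pathSum G z N u X := by
        rw [pathSum_eq_tsum_indicator]
        exact ENNReal.tsum_comp_le_tsum_of_injective Subtype.val_injective _
    _ ≤ ⨆ n : ℕ, pathSum G z n u X := le_iSup (fun n : ℕ ↦ pathSum G z n u X) N

/-- The decomposition of a walk by its first step. -/
def sigmaWalkEquiv (G : SimpleGraph V) (u : V) :
    Unit ⊕ (Σ b : G.neighborSet u, Σ w : V, G.Walk b.1 w) ≃ Σ w : V, G.Walk u w where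
  toFun
    | .inl _ => ⟨u, .nil⟩
    | .inr ⟨b, w, p⟩ => ⟨w, .cons b.2 p⟩
  invFun
    | ⟨_, .nil⟩ => .inl ()
    | ⟨w, .cons h p⟩ => .inr ⟨⟨_, h⟩, w, p⟩
  left_inv := by rintro (_ | ⟨b, w, p⟩) <;> rfl
  right_inv := by rintro ⟨w, (_ | ⟨h, p⟩)⟩ <;> rfl

theorem cons_mem_avoidingPaths {w : V} (hu : u ∉ X) (h : G.Adj u v) (p : G.Walk v w) :
    (⟨w, .cons h p⟩ : Σ w : V, G.Walk u w) ∈ avoidingPaths G (n + 1) u X ↔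
      ⟨w, p⟩ ∈ avoidingPaths G n v (insert u X) := by
  have hlen : ((p.length + 1 : ℕ) : ℕ∞) < n + 1 ↔ (p.length : ℕ∞) < n := by
    rw [Nat.cast_succ, ENat.add_lt_add_iff_right ENat.one_ne_top]
  simp only [avoidingPaths, Set.mem_ofPred_eq, SimpleGraph.Walk.cons_isPath_iff,
    SimpleGraph.Walk.support_cons, SimpleGraph.Walk.length_cons, hlen, List.mem_cons,
    Set.mem_insert_iff]
  grind

theorem pathSum_succ (hu : u ∉ X) :
    pathSum G z (n + 1) u X = 1 + z * ∑' b : G.neighborSet u, pathSum G z n b (insert u X) := by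
  classical
  simp only [pathSum_eq_tsum_indicator]
  rw [← (sigmaWalkEquiv G u).tsum_eq, Summable.tsum_sum ENNReal.summable ENNReal.summable,
    ENNReal.tsum_sigma', ← ENNReal.tsum_mul_left]
  congr 1
  · simp [sigmaWalkEquiv, avoidingPaths, hu]
  · refine tsum_congr fun b ↦ ?_
    rw [← ENNReal.tsum_mul_left]
    refine tsum_congr fun ⟨w, p⟩ ↦ ?_
    simp only [sigmaWalkEquiv, Equiv.coe_fn_mk, Set.indicator_apply,
      cons_mem_avoidingPaths hu b.2 p, mul_ite, mul_zero]
    exact if_congr Iff.rfl (pow_succ' z p.length) rfl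

theorem pathSum_top (hu : u ∉ X) :
    pathSum G z ⊤ u X = 1 + z * ∑' b : G.neighborSet u, pathSum G z ⊤ b (insert u X) := by
  rw [← pathSum_succ hu, top_add]

theorem pathSum_le (n : ℕ∞) (u : V) (X : Set V) :
    pathSum G z n u X ≤ 1 + z * ∑' b : G.neighborSet u, pathSum G z n b (insert u X) := by
  by_cases hu : u ∈ X
  · exact (pathSum_of_mem hu).trans_le zero_le
  · exact (pathSum_mono le_self_add).trans_eq (pathSum_succ hu)

theorem pathSum_natCast_ne_top (hlf : ∀ v : V, (G.neighborSet v).Finite) (hz : z ≠ ⊤) (n : ℕ) :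
    ∀ u X, pathSum G z n u X ≠ ⊤ := by
  induction n with
  | zero => simp [pathSum_zero]
  | succ n ih =>
    intro u X
    by_cases hu : u ∈ X
    · simp [pathSum_of_mem hu]
    · have := (hlf u).fintype
      rw [Nat.cast_succ, pathSum_succ hu, tsum_fintype]
      exact ENNReal.add_ne_top.2 ⟨ENNReal.one_ne_top,
        ENNReal.mul_ne_top hz (ENNReal.sum_ne_top.2 fun b _ ↦ ih b _)⟩

theorem avoidingPaths_natCast_finite (hlf : ∀ v : V, (G.neighborSet v).Finite) (n : ℕ) (u : V)
    (X : Set V) : (avoidingPaths G n u X).Finite := by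
  have h : pathSum G 1 n u X = (avoidingPaths G n u X).encard := by
    simp only [pathSum, one_pow, ENNReal.tsum_set_one]
  rw [← Set.encard_ne_top_iff]
  exact fun htop ↦ pathSum_natCast_ne_top hlf ENNReal.one_ne_top n u X (by rw [h, htop]; rfl)

theorem pathSum_le_of_neighborSet_eq {a b d : V} (hab : a ≠ b) (had : a ≠ d) (hbd : b ≠ d)
    (hu : G.neighborSet u = {a, b, d}) :
    pathSum G z n u X ≤ 1 + z * (pathSum G z n a (insert u X) +
      (pathSum G z n b (insert u X) + pathSum G z n d (insert u X))) :=
  (pathSum_le n u X).trans_eq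
    (by rw [tsum_coe_eq_of_eq_triple hab had hbd hu fun y ↦ pathSum G z n y (insert u X)])

theorem pathSum_top_of_neighborSet_eq {a b d : V} (hab : a ≠ b) (had : a ≠ d) (hbd : b ≠ d)
    (hu : G.neighborSet u = {a, b, d}) (huX : u ∉ X) :
    pathSum G z ⊤ u X = 1 + z * (pathSum G z ⊤ a (insert u X) +
      (pathSum G z ⊤ b (insert u X) + pathSum G z ⊤ d (insert u X))) := by
  rw [pathSum_top huX, tsum_coe_eq_of_eq_triple hab had hbd hu fun y ↦ pathSum G z ⊤ y (insert u X)]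

end PathSum

section BasePoint

variable {V : Type*} {G : SimpleGraph V} {z : ℝ≥0∞} {u v : V} {X : Set V}

theorem mul_pathSum_insert_le (h : G.Adj u v) (hu : u ∉ X) :
    z * pathSum G z ⊤ v (insert u X) ≤ pathSum G z ⊤ u X := by
  rw [pathSum_top hu]
  refine le_add_left ?_
  gcongr
  exact ENNReal.le_tsum (f := fun b : G.neighborSet u ↦ pathSum G z ⊤ b (insert u X)) ⟨v, h⟩

theorem mem_avoidingPaths_top_empty {p : Σ w : V, G.Walk u w} :
    p ∈ avoidingPaths G ⊤ u ∅ ↔ p.2.IsPath := by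
  simp [avoidingPaths]

-- A self-avoiding walk through `u` is cut at `u` into two self-avoiding walks starting at `u`.
theorem tsum_paths_through_le :
    ∑' p : {p : Σ w : V, G.Walk v w | p.2.IsPath ∧ u ∈ p.2.support}, z ^ p.1.2.length ≤
      pathSum G z ⊤ u ∅ ^ 2 := by
  classical
  let A := {p : Σ w : V, G.Walk v w | p.2.IsPath ∧ u ∈ p.2.support}
  let P := avoidingPaths G ⊤ u ∅
  let cut (p : A) : P × P :=
    (⟨⟨v, (p.1.2.takeUntil u p.2.2).reverse⟩,
      mem_avoidingPaths_top_empty.2 (p.2.1.takeUntil p.2.2).reverse⟩,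
    ⟨⟨p.1.1, p.1.2.dropUntil u p.2.2⟩, mem_avoidingPaths_top_empty.2 (p.2.1.dropUntil p.2.2)⟩)
  let glue (s : P × P) : Σ a b : V, G.Walk a b :=
    ⟨s.1.1.1, s.2.1.1, s.1.1.2.reverse.append s.2.1.2⟩
  have glue_cut (p : A) : glue (cut p) = ⟨v, p.1⟩ := by
    simp [glue, cut, SimpleGraph.Walk.take_spec]
  have cut_injective : Function.Injective cut := fun p q hpq ↦ by
    have h := congrArg glue hpq
    rw [glue_cut, glue_cut] at h
    exact Subtype.ext (eq_of_heq (Sigma.mk.inj h).2)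
  have length_cut (p : A) : p.1.2.length = (cut p).1.1.2.length + (cut p).2.1.2.length := by
    rw [SimpleGraph.Walk.length_reverse, ← SimpleGraph.Walk.length_append,
      SimpleGraph.Walk.take_spec]
  calc ∑' p : A, z ^ p.1.2.length
      = ∑' p : A, z ^ (cut p).1.1.2.length * z ^ (cut p).2.1.2.length := by
        simp_rw [← pow_add, ← length_cut]
    _ ≤ ∑' s : P × P, z ^ s.1.1.2.length * z ^ s.2.1.2.length :=
        ENNReal.tsum_comp_le_tsum_of_injective cut_injective _
    _ = pathSum G z ⊤ u ∅ ^ 2 := by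
        simp_rw [ENNReal.tsum_prod', ENNReal.tsum_mul_left, ENNReal.tsum_mul_right, sq]
        rfl

theorem pathSum_le_add_sq (u v : V) :
    pathSum G z ⊤ v ∅ ≤ pathSum G z ⊤ v {u} + pathSum G z ⊤ u ∅ ^ 2 := by
  have hcover : avoidingPaths G ⊤ v ∅ ⊆
      avoidingPaths G ⊤ v {u} ∪ {p | p.2.IsPath ∧ u ∈ p.2.support} := by
    intro p hp
    by_cases hu : u ∈ p.2.support
    · exact .inr ⟨hp.1, hu⟩
    · exact .inl ⟨hp.1, fun y hy hyu ↦ hu (hyu ▸ hy), hp.2.2⟩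
  calc pathSum G z ⊤ v ∅ ≤ _ := ENNReal.tsum_mono_subtype (fun p ↦ z ^ p.2.length) hcover
    _ ≤ _ := ENNReal.tsum_union_le (fun p : Σ w : V, G.Walk v w ↦ z ^ p.2.length) _ _
    _ ≤ _ := add_le_add le_rfl tsum_paths_through_le

theorem pathSum_ne_top_of_adj (hz : z ≠ 0) (h : G.Adj u v)
    (hu : pathSum G z ⊤ u ∅ ≠ ⊤) : pathSum G z ⊤ v ∅ ≠ ⊤ := by
  refine ne_top_of_le_ne_top (ENNReal.add_ne_top.2 ⟨?_, ENNReal.pow_ne_top hu⟩)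
    (pathSum_le_add_sq u v)
  exact fun htop ↦ hu (top_le_iff.1 (by
    simpa [htop, ENNReal.mul_top hz] using
      mul_pathSum_insert_le (z := z) h (Set.notMem_empty u)))

theorem pathSum_ne_top_of_reachable (hz : z ≠ 0) (h : G.Reachable u v)
    (hu : pathSum G z ⊤ u ∅ ≠ ⊤) : pathSum G z ⊤ v ∅ ≠ ⊤ := by
  obtain ⟨p⟩ := h
  induction p with
  | nil => exact hu
  | cons h _ ih => exact ih (pathSum_ne_top_of_adj hz h hu)

end BasePoint

section RootTest

variable {a : ℕ → ℝ} {μ z : ℝ}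

theorem mul_pow_eq_rpow_one_div_mul_pow {x : ℝ} (hx : 0 ≤ x) (z : ℝ) {n : ℕ} (hn : n ≠ 0) :
    x * z ^ n = (z * x ^ ((1 : ℝ) / n)) ^ n := by
  rw [mul_pow, one_div, Real.rpow_inv_natCast_pow hx hn, mul_comm]

theorem summable_mul_pow_of_mul_lt_one (ha : ∀ n, 0 ≤ a n) (hz : 0 ≤ z)
    (hμ : Tendsto (fun n : ℕ ↦ a n ^ ((1 : ℝ) / n)) atTop (𝓝 μ)) (h : z * μ < 1) :
    Summable fun n ↦ a n * z ^ n := by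
  obtain ⟨r, hr, hr1⟩ := exists_between h
  have hμ0 : 0 ≤ μ := ge_of_tendsto' hμ fun n ↦ Real.rpow_nonneg (ha n) _
  refine Summable.of_norm_bounded_eventually_nat
    (summable_geometric_of_lt_one ((mul_nonneg hz hμ0).trans hr.le) hr1) ?_
  filter_upwards [(hμ.const_mul z).eventually_lt_const hr, eventually_ne_atTop 0] with n hn hn0
  rw [Real.norm_of_nonneg (mul_nonneg (ha n) (pow_nonneg hz n)),
    mul_pow_eq_rpow_one_div_mul_pow (ha n) z hn0]
  exact pow_le_pow_left₀ (mul_nonneg hz (Real.rpow_nonneg (ha n) _)) hn.le n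

theorem mul_le_one_of_summable_mul_pow (ha : ∀ n, 0 ≤ a n)
    (hμ : Tendsto (fun n : ℕ ↦ a n ^ ((1 : ℝ) / n)) atTop (𝓝 μ))
    (hs : Summable fun n ↦ a n * z ^ n) : z * μ ≤ 1 := by
  by_contra! h
  have hsmall := hs.tendsto_atTop_zero.eventually_lt_const one_pos
  have hlarge := (hμ.const_mul z).eventually_const_lt h
  obtain ⟨n, hn, hn1, hn0⟩ := (hsmall.and (hlarge.and (eventually_ne_atTop 0))).exists
  rw [mul_pow_eq_rpow_one_div_mul_pow (ha n) z hn0] at hn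
  exact hn.not_ge (one_le_pow₀ hn1.le)

end RootTest

section CriticalWeight

theorem one_div_sq_eq_of_mul_le_one {μ μt : ℝ} (hμ : 0 < μ) (hμt : 0 ≤ μt)
    (hle : ∀ s t : ℝ, 0 < s → 0 < t → s ^ 2 ≤ t ^ 3 + t ^ 4 → t * μt < 1 → s * μ ≤ 1)
    (hlt : ∀ s t : ℝ, 0 < s → 0 < t → t ^ 3 + t ^ 4 < s ^ 2 → s * μ < 1 → t * μt ≤ 1) :
    1 / μ ^ 2 = (1 / μt) ^ 3 + (1 / μt) ^ 4 := by
  have hle' {t : ℝ} (ht : 0 < t) (h : t * μt < 1) : t ^ 3 + t ^ 4 ≤ 1 / μ ^ 2 := by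
    have := hle (√(t ^ 3 + t ^ 4)) t (by positivity) ht (Real.sq_sqrt (by positivity)).le h
    rwa [← le_div_iff₀ hμ, Real.sqrt_le_left (by positivity), div_pow, one_pow] at this
  have hge' {t : ℝ} (ht : 0 < t) (h : 1 < t * μt) : 1 / μ ^ 2 ≤ t ^ 3 + t ^ 4 := by
    by_contra! hlt'
    obtain ⟨s, hs, hs'⟩ := exists_between
      ((Real.sqrt_lt' (by positivity)).2 (by rwa [div_pow, one_pow]) : √(t ^ 3 + t ^ 4) < 1 / μ)
    have hs0 : 0 < s := (Real.sqrt_nonneg _).trans_lt hs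
    exact h.not_ge (hlt s t hs0 ht ((Real.sqrt_lt' hs0).1 hs) ((lt_div_iff₀ hμ).1 hs'))
  have hμt0 : 0 < μt := by
    refine hμt.lt_of_ne' fun h0 ↦ ?_
    have ht : 1 < 1 + 1 / μ ^ 2 := lt_add_of_pos_right 1 (by positivity)
    have hpow := hle' (one_pos.trans ht) (by simp [h0])
    linarith [le_self_pow₀ ht.le three_ne_zero, pow_pos (one_pos.trans ht) 4]
  have hcont : Continuous fun t : ℝ ↦ t ^ 3 + t ^ 4 := by fun_prop
  have ht0 : 0 < 1 / μt := by positivity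
  apply le_antisymm
  · refine ge_of_tendsto (hcont.continuousWithinAt (s := Set.Ioi (1 / μt))) ?_
    filter_upwards [self_mem_nhdsWithin] with t ht
    exact hge' (ht0.trans ht) ((div_lt_iff₀ hμt0).1 ht)
  · refine le_of_tendsto (hcont.continuousWithinAt (s := Set.Iio (1 / μt))) ?_
    filter_upwards [Ioo_mem_nhdsLT ht0] with t ht
    exact hle' ht.1 ((lt_div_iff₀ hμt0).1 ht.2)

end CriticalWeight

section SawCount

variable {V : Type*} {G : SimpleGraph V} {μ : ℝ}

theorem sawCount_eq_encard (hlf : ∀ v : V, (G.neighborSet v).Finite) (u : V) (n : ℕ) :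
    (sawCount G u n : ℕ∞) =
      {p : Σ w : V, G.Walk u w | p.2.IsPath ∧ p.2.length = n}.encard := by
  refine Set.Finite.cast_ncard_eq ((avoidingPaths_natCast_finite hlf (n + 1) u ∅).subset ?_)
  rintro p ⟨hp, rfl⟩
  exact ⟨hp, fun y _ ↦ Set.notMem_empty y, Nat.cast_lt.2 p.2.length.lt_succ_self⟩

theorem pathSum_top_empty_eq_tsum (hlf : ∀ v : V, (G.neighborSet v).Finite) (z : ℝ≥0∞) (u : V) :
    pathSum G z ⊤ u ∅ = ∑' n : ℕ, (sawCount G u n : ℝ≥0∞) * z ^ n := by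
  classical
  let S (n : ℕ) : Set (Σ w : V, G.Walk u w) := {p | p.2.IsPath ∧ p.2.length = n}
  have hS (n : ℕ) : (sawCount G u n : ℝ≥0∞) * z ^ n = ∑' p, (S n).indicator (fun _ ↦ z ^ n) p := by
    rw [← tsum_subtype (S n) fun _ ↦ z ^ n, ENNReal.tsum_set_const, ← sawCount_eq_encard hlf]
    rfl
  simp_rw [hS]
  rw [ENNReal.tsum_comm, pathSum_eq_tsum_indicator]
  refine tsum_congr fun p ↦ ?_
  rw [tsum_eq_single p.2.length fun n hn ↦ Set.indicator_of_notMem (fun h ↦ hn h.2.symm) _]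
  simp [Set.indicator_apply, S, avoidingPaths]

theorem pathSum_ne_top_iff_summable (hlf : ∀ v : V, (G.neighborSet v).Finite) {z : ℝ≥0}
    {u : V} :
    pathSum G z ⊤ u ∅ ≠ ⊤ ↔ Summable fun n ↦ (sawCount G u n : ℝ) * (z : ℝ) ^ n := by
  rw [pathSum_top_empty_eq_tsum hlf]
  exact_mod_cast ENNReal.tsum_coe_ne_top_iff_summable_coe
    (f := fun n ↦ (sawCount G u n : ℝ≥0) * z ^ n)

theorem pathSum_ne_top_of_mul_lt_one (hlf : ∀ v : V, (G.neighborSet v).Finite)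
    {z : ℝ≥0} {u : V}
    (hμ : Tendsto (fun n : ℕ ↦ (sawCount G u n : ℝ) ^ ((1 : ℝ) / n)) atTop (𝓝 μ))
    (h : z * μ < 1) : pathSum G z ⊤ u ∅ ≠ ⊤ :=
  (pathSum_ne_top_iff_summable hlf).2 <|
    summable_mul_pow_of_mul_lt_one (fun _ ↦ Nat.cast_nonneg _) z.2 hμ h

theorem mul_le_one_of_pathSum_ne_top (hlf : ∀ v : V, (G.neighborSet v).Finite)
    {z : ℝ≥0} {u : V}
    (hμ : Tendsto (fun n : ℕ ↦ (sawCount G u n : ℝ) ^ ((1 : ℝ) / n)) atTop (𝓝 μ))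
    (h : pathSum G z ⊤ u ∅ ≠ ⊤) : z * μ ≤ 1 :=
  mul_le_one_of_summable_mul_pow (fun _ ↦ Nat.cast_nonneg _) hμ <|
    (pathSum_ne_top_iff_summable hlf).1 h

theorem length_lt_of_sawCount_eq_zero (hlf : ∀ v : V, (G.neighborSet v).Finite) {u w : V} {n : ℕ}
    (hn : sawCount G u n = 0) {p : G.Walk u w} (hp : p.IsPath) : p.length < n := by
  by_contra! hle
  have hempty := sawCount_eq_encard hlf u n
  rw [hn, Nat.cast_zero, eq_comm, Set.encard_eq_zero] at hempty
  refine Set.eq_empty_iff_forall_notMem.1 hempty ⟨_, p.take n⟩ ⟨hp.take n, ?_⟩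
  simpa [SimpleGraph.Walk.take_length] using hle

theorem sawCount_pos [Infinite V] (hconn : G.Connected) (hlf : ∀ v : V, (G.neighborSet v).Finite)
    (u : V) (n : ℕ) : 0 < sawCount G u n := by
  by_contra! hn
  choose p hp using fun w ↦ hconn.exists_isPath u w
  have hmem (w : V) : (⟨w, p w⟩ : Σ w : V, G.Walk u w) ∈ avoidingPaths G n u ∅ :=
    ⟨hp w, fun y _ ↦ Set.notMem_empty y,
      Nat.cast_lt.2 (length_lt_of_sawCount_eq_zero hlf (Nat.le_zero.1 hn) (hp w))⟩
  have := (avoidingPaths_natCast_finite hlf n u ∅).to_subtype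
  have hinj : Function.Injective fun w ↦ (⟨⟨w, p w⟩, hmem w⟩ : avoidingPaths G n u ∅) :=
    fun w w' h ↦ congrArg (fun q : avoidingPaths G n u ∅ ↦ q.1.1) h
  exact Infinite.not_finite (Finite.of_injective _ hinj)

theorem one_le_of_tendsto_sawCount_rpow [Infinite V] (hconn : G.Connected)
    (hlf : ∀ v : V, (G.neighborSet v).Finite) {u : V}
    (hμ : Tendsto (fun n : ℕ ↦ (sawCount G u n : ℝ) ^ ((1 : ℝ) / n)) atTop (𝓝 μ)) : 1 ≤ μ :=
  ge_of_tendsto' hμ fun n ↦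
    Real.one_le_rpow (mod_cast sawCount_pos hconn hlf u n) (by positivity)

end SawCount

section FisherGraph

variable {V : Type*} {G : SimpleGraph V} {c : V → Bool}

/-- The vertices of `fisherBlack G c`. -/
abbrev FisherVertex (G : SimpleGraph V) (c : V → Bool) : Type _ :=
  {v : V // c v = false} ⊕ {d : G.Dart // c d.toProd.1 = true}

/-- The dart `(b, w)` with black first vertex `b`, as a vertex of `fisherBlack G c`. -/
def dartVertex {b w : V} (h : G.Adj b w) (hb : c b = true) : FisherVertex G c :=
  Sum.inr ⟨⟨(b, w), h⟩, hb⟩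

theorem dartVertex_inj {b w w' : V} {h : G.Adj b w} {h' : G.Adj b w'} {hb : c b = true} :
    dartVertex h hb = dartVertex h' hb ↔ w = w' := by
  simp [dartVertex]

theorem not_fisherBlack_adj_inl_inl (w w' : {v : V // c v = false}) :
    ¬(fisherBlack G c).Adj (Sum.inl w) (Sum.inl w') := by
  simp [fisherBlack]

theorem fisherBlack_adj_inr_inl {d : {d : G.Dart // c d.toProd.1 = true}}
    {w : {v : V // c v = false}} :
    (fisherBlack G c).Adj (Sum.inr d) (Sum.inl w) ↔ d.1.snd = w := by
  simp [fisherBlack]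

theorem fisherBlack_adj_inr_inr {d d' : {d : G.Dart // c d.toProd.1 = true}} :
    (fisherBlack G c).Adj (Sum.inr d) (Sum.inr d') ↔ d ≠ d' ∧ d.1.fst = d'.1.fst := by
  rw [fisherBlack, SimpleGraph.fromRel_adj, or_iff_left_of_imp Eq.symm, Sum.inr_injective.ne_iff]

theorem black_of_adj_white (hbip : ∀ u w : V, G.Adj u w → c u ≠ c w) {b w : V} (h : G.Adj b w)
    (hw : c w = false) : c b = true :=
  Bool.eq_true_of_not_eq_false (hw ▸ hbip b w h)

theorem white_of_adj_black (hbip : ∀ u w : V, G.Adj u w → c u ≠ c w) {b w : V} (h : G.Adj b w)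
    (hb : c b = true) : c w = false :=
  Bool.eq_false_of_not_eq_true (hb ▸ (hbip b w h).symm)

theorem neighborSet_fisherBlack_inl (hbip : ∀ u w : V, G.Adj u w → c u ≠ c w)
    (w : {v : V // c v = false}) :
    (fisherBlack G c).neighborSet (Sum.inl w) =
      Set.range fun b : G.neighborSet w ↦
        dartVertex b.2.symm (black_of_adj_white hbip b.2.symm w.2) := by
  ext (w' | ⟨⟨⟨b, w'⟩, hbw⟩, hb⟩)
  · simp [not_fisherBlack_adj_inl_inl, dartVertex]
  · rw [SimpleGraph.mem_neighborSet, SimpleGraph.adj_comm, fisherBlack_adj_inr_inl]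
    simp only [dartVertex, Set.mem_range, Sum.inr.injEq, Subtype.mk.injEq,
      SimpleGraph.Dart.mk.injEq, Prod.mk.injEq, Subtype.exists, SimpleGraph.mem_neighborSet]
    constructor
    · rintro rfl
      exact ⟨b, hbw.symm, rfl, rfl⟩
    · rintro ⟨_, _, _, h⟩
      exact h.symm

theorem tsum_neighborSet_fisherBlack_inl (hbip : ∀ u w : V, G.Adj u w → c u ≠ c w)
    (w : {v : V // c v = false}) (f : FisherVertex G c → ℝ≥0∞) :
    ∑' x : (fisherBlack G c).neighborSet (Sum.inl w), f x =
      ∑' b : G.neighborSet w, f (dartVertex b.2.symm (black_of_adj_white hbip b.2.symm w.2)) := by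
  rw [tsum_congr_set_coe f (neighborSet_fisherBlack_inl hbip w), tsum_range]
  rintro ⟨b, hb⟩ ⟨b', hb'⟩ h
  simp only [dartVertex, Sum.inr.injEq, Subtype.mk.injEq, SimpleGraph.Dart.mk.injEq,
    Prod.mk.injEq] at h
  exact Subtype.ext h.1

/-- `b` is a black vertex whose neighbours are the three distinct white vertices `w₁, w₂, w₃`. -/
structure IsTripod (G : SimpleGraph V) (c : V → Bool) (b w₁ w₂ w₃ : V) : Prop where
  black : c b = true
  white₁ : c w₁ = false
  white₂ : c w₂ = false
  white₃ : c w₃ = false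
  ne₁₂ : w₁ ≠ w₂
  ne₁₃ : w₁ ≠ w₃
  ne₂₃ : w₂ ≠ w₃
  neighborSet_eq : G.neighborSet b = {w₁, w₂, w₃}

namespace IsTripod

variable {b w₁ w₂ w₃ : V}

theorem swap₁₂ (T : IsTripod G c b w₁ w₂ w₃) : IsTripod G c b w₂ w₁ w₃ :=
  ⟨T.black, T.white₂, T.white₁, T.white₃, T.ne₁₂.symm, T.ne₂₃, T.ne₁₃,
    T.neighborSet_eq.trans (Set.insert_comm w₁ w₂ {w₃})⟩

theorem swap₂₃ (T : IsTripod G c b w₁ w₂ w₃) : IsTripod G c b w₁ w₃ w₂ :=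
  ⟨T.black, T.white₁, T.white₃, T.white₂, T.ne₁₃, T.ne₁₂, T.ne₂₃.symm,
    T.neighborSet_eq.trans (by rw [Set.pair_comm])⟩

theorem adj₁ (T : IsTripod G c b w₁ w₂ w₃) : G.Adj b w₁ := by
  rw [← SimpleGraph.mem_neighborSet, T.neighborSet_eq]
  exact Set.mem_insert w₁ _

/-- The vertex of the triangle replacing `b` that is attached to `w₁`. -/
def corner₁ (T : IsTripod G c b w₁ w₂ w₃) : FisherVertex G c := dartVertex T.adj₁ T.black

/-- The vertex of the triangle replacing `b` that is attached to `w₂`. -/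
def corner₂ (T : IsTripod G c b w₁ w₂ w₃) : FisherVertex G c := T.swap₁₂.corner₁

/-- The vertex of the triangle replacing `b` that is attached to `w₃`. -/
def corner₃ (T : IsTripod G c b w₁ w₂ w₃) : FisherVertex G c := T.swap₂₃.corner₂

theorem corner₁_ne_corner₂ (T : IsTripod G c b w₁ w₂ w₃) : T.corner₁ ≠ T.corner₂ :=
  dartVertex_inj.not.2 T.ne₁₂

theorem corner₁_ne_corner₃ (T : IsTripod G c b w₁ w₂ w₃) : T.corner₁ ≠ T.corner₃ :=
  dartVertex_inj.not.2 T.ne₁₃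

theorem corner₂_ne_corner₃ (T : IsTripod G c b w₁ w₂ w₃) : T.corner₂ ≠ T.corner₃ :=
  dartVertex_inj.not.2 T.ne₂₃

theorem fst_eq_iff (T : IsTripod G c b w₁ w₂ w₃) {d : {d : G.Dart // c d.toProd.1 = true}} :
    d.1.fst = b ↔ Sum.inr d = T.corner₁ ∨ Sum.inr d = T.corner₂ ∨ Sum.inr d = T.corner₃ := by
  constructor
  · obtain ⟨⟨⟨b, w⟩, h⟩, hb⟩ := d
    rintro rfl
    rcases T.neighborSet_eq.le h with rfl | rfl | rfl
    · exact .inl rfl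
    · exact .inr (.inl rfl)
    · exact .inr (.inr rfl)
  · rintro (h | h | h) <;> exact Sum.inr.inj h ▸ rfl

theorem neighborSet_corner₁ (T : IsTripod G c b w₁ w₂ w₃) :
    (fisherBlack G c).neighborSet T.corner₁ = {Sum.inl ⟨w₁, T.white₁⟩, T.corner₂, T.corner₃} := by
  ext (w | d)
  · rw [SimpleGraph.mem_neighborSet, corner₁, dartVertex, fisherBlack_adj_inr_inl]
    simp [corner₂, corner₃, corner₁, dartVertex, Subtype.ext_iff, eq_comm]
  · have hadj : (fisherBlack G c).Adj T.corner₁ (Sum.inr d) ↔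
        T.corner₁ ≠ Sum.inr d ∧ d.1.fst = b := by
      rw [corner₁, dartVertex, fisherBlack_adj_inr_inr, Sum.inr_injective.ne_iff, eq_comm (a := b)]
    have h₁₂ := T.corner₁_ne_corner₂
    have h₁₃ := T.corner₁_ne_corner₃
    rw [SimpleGraph.mem_neighborSet, hadj, T.fst_eq_iff]
    simp only [Set.mem_insert_iff, Set.mem_singleton_iff, reduceCtorEq, false_or]
    grind

theorem corner₁_adj_inl (T : IsTripod G c b w₁ w₂ w₃) :
    (fisherBlack G c).Adj T.corner₁ (Sum.inl ⟨w₁, T.white₁⟩) :=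
  fisherBlack_adj_inr_inl.2 rfl

end IsTripod

theorem exists_isTripod (hbip : ∀ u w : V, G.Adj u w → c u ≠ c w)
    (hcubic : ∀ v : V, c v = true → (G.neighborSet v).ncard = 3) {b w₁ : V} (h : G.Adj b w₁)
    (hb : c b = true) : ∃ w₂ w₃, IsTripod G c b w₁ w₂ w₃ := by
  obtain ⟨x, y, z, hxy, hxz, hyz, hN⟩ := Set.ncard_eq_three.1 (hcubic b hb)
  have hwhite (w) (hw : w ∈ ({x, y, z} : Set V)) : c w = false :=
    white_of_adj_black hbip (hN.ge hw) hb
  have T : IsTripod G c b x y z := ⟨hb, hwhite x (by simp), hwhite y (by simp),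
    hwhite z (by simp), hxy, hxz, hyz, hN⟩
  rcases hN.le h with rfl | rfl | rfl
  · exact ⟨_, _, T⟩
  · exact ⟨_, _, T.swap₁₂⟩
  · exact ⟨_, _, T.swap₂₃.swap₁₂⟩

theorem finite_neighborSet_fisherBlack (hlf : ∀ v : V, (G.neighborSet v).Finite)
    (hbip : ∀ u w : V, G.Adj u w → c u ≠ c w)
    (hcubic : ∀ v : V, c v = true → (G.neighborSet v).ncard = 3)
    (x : FisherVertex G c) : ((fisherBlack G c).neighborSet x).Finite := by
  rcases x with w | ⟨⟨⟨b, w⟩, h⟩, hb⟩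
  · have := (hlf w).to_subtype
    rw [neighborSet_fisherBlack_inl hbip]
    exact Set.finite_range _
  · obtain ⟨w₂, w₃, T⟩ := exists_isTripod hbip hcubic h hb
    exact T.neighborSet_corner₁ ▸ Set.toFinite _

theorem exists_inl_reachable {c : V → Bool} (hbip : ∀ u w : V, G.Adj u w → c u ≠ c w)
    (x : FisherVertex G c) : ∃ w, (fisherBlack G c).Reachable (Sum.inl w) x := by
  rcases x with w | d
  · exact ⟨w, .rfl⟩
  · have hadj : (fisherBlack G c).Adj (Sum.inr d)
        (Sum.inl ⟨d.1.snd, white_of_adj_black hbip d.1.adj d.2⟩) := fisherBlack_adj_inr_inl.2 rfl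
    exact ⟨_, hadj.symm.reachable⟩

end FisherGraph

section TrackedSets

variable {V : Type*} {G : SimpleGraph V} {c : V → Bool} {X : Set V} {Y : Set (FisherVertex G c)}

/-- The set `Y` of visited vertices of `fisherBlack G c` projects to the set `X` of visited
vertices of `G`: the white vertices in `X` and `Y` are the same, no triangle replacing a black
vertex outside `X` has been entered, and each triangle replacing a black vertex in `X` has at most
one corner left. -/
structure Tracks (Y : Set (FisherVertex G c)) (X : Set V) : Prop where
  inl_mem_iff (w : {v : V // c v = false}) : Sum.inl w ∈ Y ↔ w.1 ∈ X
  inr_notMem {d : {d : G.Dart // c d.toProd.1 = true}} : d.1.fst ∉ X → Sum.inr d ∉ Y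
  inr_mem_or {d d' : {d : G.Dart // c d.toProd.1 = true}} :
    d ≠ d' → d.1.fst = d'.1.fst → d.1.fst ∈ X → Sum.inr d ∈ Y ∨ Sum.inr d' ∈ Y

theorem tracks_empty : Tracks (∅ : Set (FisherVertex G c)) ∅ :=
  ⟨fun _ ↦ Iff.rfl, fun _ ↦ Set.notMem_empty _, fun _ _ h ↦ h.elim⟩

namespace Tracks

variable {b w₁ w₂ w₃ : V}

theorem insert_inl (h : Tracks Y X) (w : {v : V // c v = false}) :
    Tracks (insert (Sum.inl w) Y) (insert w.1 X) := by
  have hne (d : {d : G.Dart // c d.toProd.1 = true}) : d.1.fst ≠ w.1 := fun hd ↦ by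
    simpa [hd, w.2] using d.2
  refine ⟨fun w' ↦ ?_, fun {d} hd ↦ ?_, fun {d d'} hdd' hfst hd ↦ ?_⟩
  · simp [h.inl_mem_iff, Subtype.ext_iff]
  · simpa using h.inr_notMem fun hX ↦ hd (.inr hX)
  · simpa using h.inr_mem_or hdd' hfst (hd.resolve_left (hne d))

theorem insert_corner₁ (h : Tracks Y X) (T : IsTripod G c b w₁ w₂ w₃) (hb : b ∈ X) :
    Tracks (insert T.corner₁ Y) X := by
  refine ⟨fun w ↦ ?_, fun {d} hd ↦ ?_, fun hdd' hfst hd ↦ ?_⟩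
  · simp [h.inl_mem_iff, IsTripod.corner₁, dartVertex]
  · rintro (hd' | hd')
    · exact hd (T.fst_eq_iff.2 (.inl hd') ▸ hb)
    · exact h.inr_notMem hd hd'
  · exact (h.inr_mem_or hdd' hfst hd).imp .inr .inr

theorem insert_corners (h : Tracks Y X) (T : IsTripod G c b w₁ w₂ w₃) :
    Tracks (insert T.corner₂ (insert T.corner₁ Y)) (insert b X) := by
  refine ⟨fun w ↦ ?_, fun {d} hd ↦ ?_, fun {d d'} hdd' hfst hd ↦ ?_⟩
  · have hwb : w.1 ≠ b := fun hw ↦ by simpa [hw, T.black] using w.2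
    simp [h.inl_mem_iff, IsTripod.corner₁, IsTripod.corner₂, dartVertex, hwb]
  · rintro (hd' | hd' | hd')
    · exact hd (.inl (T.fst_eq_iff.2 (.inr (.inl hd'))))
    · exact hd (.inl (T.fst_eq_iff.2 (.inl hd')))
    · exact h.inr_notMem (fun hX ↦ hd (.inr hX)) hd'
  · rcases hd with hd | hd
    · have hne : (Sum.inr d : FisherVertex G c) ≠ Sum.inr d' := Sum.inr_injective.ne hdd'
      have h₁ := T.fst_eq_iff.1 hd
      have h₂ := T.fst_eq_iff.1 (hfst.symm.trans hd)
      simp only [Set.mem_insert_iff]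
      grind
    · exact (h.inr_mem_or hdd' hfst hd).imp (.inr ∘ .inr) (.inr ∘ .inr)

theorem insert_three_corners (h : Tracks Y X) (T : IsTripod G c b w₁ w₂ w₃) :
    Tracks (insert T.corner₃ (insert T.corner₂ (insert T.corner₁ Y))) (insert b X) :=
  (h.insert_corners T).insert_corner₁ T.swap₂₃.swap₁₂ (Set.mem_insert b X)

theorem corner₁_mem_or_corner₂_mem (h : Tracks Y X) (T : IsTripod G c b w₁ w₂ w₃) (hb : b ∈ X) :
    T.corner₁ ∈ Y ∨ T.corner₂ ∈ Y :=
  h.inr_mem_or (fun hd ↦ T.corner₁_ne_corner₂ (congrArg Sum.inr hd)) rfl hb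

theorem corner₁_notMem (h : Tracks Y X) (T : IsTripod G c b w₁ w₂ w₃) (hb : b ∉ X) :
    T.corner₁ ∉ Y :=
  h.inr_notMem hb

theorem corner₂_notMem (h : Tracks Y X) (T : IsTripod G c b w₁ w₂ w₃) (hb : b ∉ X) :
    T.corner₂ ∉ Y :=
  h.inr_notMem hb

theorem corner₃_notMem (h : Tracks Y X) (T : IsTripod G c b w₁ w₂ w₃) (hb : b ∉ X) :
    T.corner₃ ∉ Y :=
  h.inr_notMem hb

end Tracks

end TrackedSets

section Crossing

variable {V : Type*} {G : SimpleGraph V} {c : V → Bool} {X : Set V} {Y : Set (FisherVertex G c)}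
  {b w₁ w₂ w₃ : V} {t : ℝ≥0∞} {n : ℕ∞}

namespace IsTripod

theorem pathSum_corner₁_le (T : IsTripod G c b w₁ w₂ w₃) :
    pathSum (fisherBlack G c) t n T.corner₁ Y ≤
      1 + t * (pathSum (fisherBlack G c) t n (Sum.inl ⟨w₁, T.white₁⟩) (insert T.corner₁ Y) +
        (pathSum (fisherBlack G c) t n T.corner₂ (insert T.corner₁ Y) +
          pathSum (fisherBlack G c) t n T.corner₃ (insert T.corner₁ Y))) :=
  pathSum_le_of_neighborSet_eq Sum.inl_ne_inr Sum.inl_ne_inr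
    T.corner₂_ne_corner₃ T.neighborSet_corner₁

theorem pathSum_top_corner₁ (T : IsTripod G c b w₁ w₂ w₃) (h : T.corner₁ ∉ Y) :
    pathSum (fisherBlack G c) t ⊤ T.corner₁ Y =
      1 + t * (pathSum (fisherBlack G c) t ⊤ (Sum.inl ⟨w₁, T.white₁⟩) (insert T.corner₁ Y) +
        (pathSum (fisherBlack G c) t ⊤ T.corner₂ (insert T.corner₁ Y) +
          pathSum (fisherBlack G c) t ⊤ T.corner₃ (insert T.corner₁ Y))) :=
  pathSum_top_of_neighborSet_eq Sum.inl_ne_inr Sum.inl_ne_inr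
    T.corner₂_ne_corner₃ T.neighborSet_corner₁ h

theorem pathSum_corner₁_le_one (T : IsTripod G c b w₁ w₂ w₃)
    (h₁ : Sum.inl ⟨w₁, T.white₁⟩ ∈ Y) (h₂ : T.corner₂ ∈ Y) (h₃ : T.corner₃ ∈ Y) :
    pathSum (fisherBlack G c) t n T.corner₁ Y ≤ 1 := by
  refine (pathSum_corner₁_le T).trans_eq ?_
  rw [pathSum_of_mem (.inr h₁), pathSum_of_mem (.inr h₂), pathSum_of_mem (.inr h₃)]
  simp

theorem pathSum_corner₂_le (T : IsTripod G c b w₁ w₂ w₃) (h : Tracks Y X) {P₂ P₃ : ℝ≥0∞}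
    (h₂ : ∀ Y', Tracks Y' (insert b X) →
      pathSum (fisherBlack G c) t n (Sum.inl ⟨w₂, T.white₂⟩) Y' ≤ P₂)
    (h₃ : ∀ Y', Tracks Y' (insert b X) →
      pathSum (fisherBlack G c) t n (Sum.inl ⟨w₃, T.white₃⟩) Y' ≤ P₃) :
    pathSum (fisherBlack G c) t n T.corner₂ (insert T.corner₁ Y) ≤
      1 + t * (P₂ + (1 + t * P₃)) := by
  let F (x Y) := pathSum (fisherBlack G c) t n x Y
  let Y₁ := insert T.corner₁ Y
  let Y₂ := insert T.corner₂ Y₁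
  let Y₃ := insert T.corner₃ Y₂
  have hlast : F T.corner₃ Y₂ ≤ 1 + t * P₃ := calc
    F T.corner₃ Y₂
      ≤ 1 + t * (F (Sum.inl ⟨w₃, T.white₃⟩) Y₃ + (F T.corner₁ Y₃ + F T.corner₂ Y₃)) :=
        pathSum_corner₁_le T.swap₂₃.swap₁₂
    _ = 1 + t * F (Sum.inl ⟨w₃, T.white₃⟩) Y₃ := by
        simp [F, pathSum_of_mem, Y₁, Y₂, Y₃]
    _ ≤ 1 + t * P₃ := by gcongr; exact h₃ Y₃ (h.insert_three_corners T)
  calc F T.corner₂ Y₁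
      ≤ 1 + t * (F (Sum.inl ⟨w₂, T.white₂⟩) Y₂ + (F T.corner₁ Y₂ + F T.corner₃ Y₂)) :=
        pathSum_corner₁_le T.swap₁₂
    _ = 1 + t * (F (Sum.inl ⟨w₂, T.white₂⟩) Y₂ + F T.corner₃ Y₂) := by
        simp [F, pathSum_of_mem, Y₁, Y₂]
    _ ≤ 1 + t * (P₂ + (1 + t * P₃)) := by gcongr; exact h₂ Y₂ (h.insert_corners T)

theorem mul_pathSum_corner₁_le (T : IsTripod G c b w₁ w₂ w₃) (h : Tracks Y X)
    (h₁ : Sum.inl ⟨w₁, T.white₁⟩ ∈ Y) {P₂ P₃ : ℝ≥0∞}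
    (h₂ : ∀ Y', Tracks Y' (insert b X) →
      pathSum (fisherBlack G c) t n (Sum.inl ⟨w₂, T.white₂⟩) Y' ≤ P₂)
    (h₃ : ∀ Y', Tracks Y' (insert b X) →
      pathSum (fisherBlack G c) t n (Sum.inl ⟨w₃, T.white₃⟩) Y' ≤ P₃) :
    t * pathSum (fisherBlack G c) t n T.corner₁ Y ≤
      t * (1 + 2 * t + 2 * t ^ 2) + (t ^ 3 + t ^ 4) * (P₂ + P₃) := by
  calc t * pathSum (fisherBlack G c) t n T.corner₁ Y
      ≤ t * (1 + t * (0 + ((1 + t * (P₂ + (1 + t * P₃))) + (1 + t * (P₃ + (1 + t * P₂)))))) := by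
        grw [pathSum_corner₁_le T, pathSum_of_mem (.inr h₁), pathSum_corner₂_le T h h₂ h₃]
        gcongr
        exact pathSum_corner₂_le T.swap₂₃ h h₃ h₂
    _ = t * (1 + 2 * t + 2 * t ^ 2) + (t ^ 3 + t ^ 4) * (P₂ + P₃) := by ring

theorem le_pathSum_corner₂ (T : IsTripod G c b w₁ w₂ w₃) (h : Tracks Y X) (hb : b ∉ X)
    {P₂ P₃ : ℝ≥0∞}
    (h₂ : ∀ Y', Tracks Y' (insert b X) →
      P₂ ≤ pathSum (fisherBlack G c) t ⊤ (Sum.inl ⟨w₂, T.white₂⟩) Y')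
    (h₃ : ∀ Y', Tracks Y' (insert b X) →
      P₃ ≤ pathSum (fisherBlack G c) t ⊤ (Sum.inl ⟨w₃, T.white₃⟩) Y') :
    t * P₂ + t ^ 2 * P₃ ≤ pathSum (fisherBlack G c) t ⊤ T.corner₂ (insert T.corner₁ Y) := by
  let F (x Y) := pathSum (fisherBlack G c) t ⊤ x Y
  let Y₁ := insert T.corner₁ Y
  let Y₂ := insert T.corner₂ Y₁
  let Y₃ := insert T.corner₃ Y₂
  have hY₁ : T.corner₂ ∉ Y₁ := by
    simp [Y₁, T.corner₁_ne_corner₂.symm, h.corner₂_notMem T hb]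
  have hY₂ : T.corner₃ ∉ Y₂ := by
    simp [Y₁, Y₂, T.corner₁_ne_corner₃.symm, T.corner₂_ne_corner₃.symm, h.corner₃_notMem T hb]
  have hlast : t * P₃ ≤ F T.corner₃ Y₂ := calc
    t * P₃ ≤ t * F (Sum.inl ⟨w₃, T.white₃⟩) Y₃ := by
        gcongr; exact h₃ Y₃ (h.insert_three_corners T)
    _ ≤ F T.corner₃ Y₂ := mul_pathSum_insert_le T.swap₂₃.swap₁₂.corner₁_adj_inl hY₂
  calc t * P₂ + t ^ 2 * P₃ = t * (P₂ + t * P₃) := by ring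
    _ ≤ t * (F (Sum.inl ⟨w₂, T.white₂⟩) Y₂ + (F T.corner₁ Y₂ + F T.corner₃ Y₂)) := by
        gcongr
        · exact h₂ Y₂ (h.insert_corners T)
        · exact hlast.trans le_add_self
    _ ≤ 1 + t * (F (Sum.inl ⟨w₂, T.white₂⟩) Y₂ + (F T.corner₁ Y₂ + F T.corner₃ Y₂)) :=
        le_add_self
    _ = F T.corner₂ Y₁ := (pathSum_top_corner₁ T.swap₁₂ hY₁).symm

theorem le_mul_pathSum_corner₁ (T : IsTripod G c b w₁ w₂ w₃) (h : Tracks Y X) (hb : b ∉ X)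
    {P₂ P₃ : ℝ≥0∞}
    (h₂ : ∀ Y', Tracks Y' (insert b X) →
      P₂ ≤ pathSum (fisherBlack G c) t ⊤ (Sum.inl ⟨w₂, T.white₂⟩) Y')
    (h₃ : ∀ Y', Tracks Y' (insert b X) →
      P₃ ≤ pathSum (fisherBlack G c) t ⊤ (Sum.inl ⟨w₃, T.white₃⟩) Y') :
    t + (t ^ 3 + t ^ 4) * (P₂ + P₃) ≤ t * pathSum (fisherBlack G c) t ⊤ T.corner₁ Y := by
  calc t + (t ^ 3 + t ^ 4) * (P₂ + P₃)
      = t * (1 + t * ((t * P₂ + t ^ 2 * P₃) + (t * P₃ + t ^ 2 * P₂))) := by ring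
    _ ≤ t * pathSum (fisherBlack G c) t ⊤ T.corner₁ Y := by
        grw [pathSum_top_corner₁ T (h.corner₁_notMem T hb), le_pathSum_corner₂ T h hb h₂ h₃,
          le_pathSum_corner₂ T.swap₂₃ h hb h₃ h₂]
        gcongr t * (1 + t * ?_)
        exact le_add_self

end IsTripod

end Crossing

section Comparison

variable {V : Type*} {G : SimpleGraph V} {c : V → Bool} {s t : ℝ≥0∞}

theorem exists_nat_mul_add_le {x y : ℝ≥0∞} (h : x < y) (k : ℕ) :
    ∃ N : ℕ, N ≠ 0 ∧ x * (N + k) ≤ N * y := by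
  obtain ⟨N, hN⟩ := ENNReal.exists_nat_mul_gt (tsub_pos_of_lt h).ne'
    (ENNReal.mul_ne_top (ENNReal.natCast_ne_top k) h.ne_top)
  refine ⟨N, fun h0 ↦ by simp [h0] at hN, ?_⟩
  calc x * (N + k) = N * x + k * x := by ring
    _ ≤ N * x + N * (y - x) := by gcongr
    _ = N * y := by rw [← mul_add, add_tsub_cancel_of_le h.le]

/-- The factors that the comparison of the generating functions of `fisherBlack G c` at `t` and of
`G` at `s` loses when `m` vertices of `G` have been visited.  The three inequalities pay,
respectively, for the trivial walk and the darts into triangles visited before, for the walks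
ending in the triangle being crossed, and for the walks crossing it. -/
structure IsComparisonFactor (s t : ℝ≥0∞) (K : ℕ → ℝ≥0∞) : Prop where
  one_add_mul_le (m : ℕ) : 1 + t * (m + 1) ≤ K m
  mul_le_mul (m : ℕ) : t * (1 + 2 * t + 2 * t ^ 2) ≤ K m * s
  mul_add_two_le (m : ℕ) : (t ^ 3 + t ^ 4) * K (m + 2) ≤ K m * s ^ 2

theorem exists_isComparisonFactor (hs : s ≠ ⊤) (hst : t ^ 3 + t ^ 4 < s ^ 2) :
    ∃ K, IsComparisonFactor s t K ∧ ∀ m, K m ≠ ⊤ := by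
  have ht : t ≠ ⊤ := by
    rintro rfl
    simp at hst
  have hs0 : s ≠ 0 := by
    rintro rfl
    simp at hst
  obtain ⟨N, hN0, hN⟩ := exists_nat_mul_add_le hst 2
  rw [Nat.cast_ofNat] at hN
  have hN1 : (1 : ℝ≥0∞) ≤ N := Nat.one_le_cast.2 (Nat.one_le_iff_ne_zero.2 hN0)
  let A := 1 + t + t * (1 + 2 * t + 2 * t ^ 2) / s
  have hA : A ≠ ⊤ := by finiteness
  refine ⟨fun m ↦ A * (m + N), ⟨fun m ↦ ?_, fun m ↦ ?_, fun m ↦ ?_⟩, fun m ↦ by finiteness⟩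
  · calc 1 + t * (m + 1) ≤ (m + 1) + t * (m + 1) := by gcongr; exact le_add_self
      _ = (1 + t) * (m + 1) := by ring
      _ ≤ A * (m + N) := by gcongr; exact le_self_add
  · calc t * (1 + 2 * t + 2 * t ^ 2) = t * (1 + 2 * t + 2 * t ^ 2) / s * s :=
          (ENNReal.div_mul_cancel hs0 hs).symm
      _ ≤ A * (m + N) * s := by
          gcongr
          exact le_add_self.trans (le_mul_of_one_le_right' (hN1.trans le_add_self))
  · calc (t ^ 3 + t ^ 4) * (A * ((m + 2 : ℕ) + N))
        = A * (m * (t ^ 3 + t ^ 4) + (t ^ 3 + t ^ 4) * (N + 2)) := by push_cast; ring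
      _ ≤ A * (m * s ^ 2 + N * s ^ 2) := by gcongr
      _ = A * (m + N) * s ^ 2 := by ring

theorem IsComparisonFactor.mul_pathSum_corner₁_le {K : ℕ → ℝ≥0∞} (hK : IsComparisonFactor s t K)
    {n : ℕ∞} (ih : ∀ (m : ℕ) (w : {v : V // c v = false}) (X : Set V) (Y : Set (FisherVertex G c)),
      X.encard ≤ m → Tracks Y X →
        pathSum (fisherBlack G c) t n (Sum.inl w) Y ≤ K m * pathSum G s ⊤ w X)
    {b w₁ w₂ w₃ : V} (T : IsTripod G c b w₁ w₂ w₃) {m : ℕ} {X : Set V}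
    {Y : Set (FisherVertex G c)} (h : Tracks Y X) (h₁ : w₁ ∈ X) (hX : X.encard ≤ m + 1) :
    t * pathSum (fisherBlack G c) t n T.corner₁ Y ≤
      X.indicator (fun _ ↦ t) b + K m * (s * pathSum G s ⊤ b X) := by
  have h₁' : Sum.inl ⟨w₁, T.white₁⟩ ∈ Y := (h.inl_mem_iff _).2 h₁
  by_cases hb : b ∈ X
  · have hle : pathSum (fisherBlack G c) t n T.corner₁ Y ≤ 1 := by
      by_cases hc : T.corner₁ ∈ Y
      · simp [pathSum_of_mem hc]
      · exact T.pathSum_corner₁_le_one h₁' ((h.corner₁_mem_or_corner₂_mem T hb).resolve_left hc)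
          ((h.corner₁_mem_or_corner₂_mem T.swap₂₃ hb).resolve_left hc)
    rw [Set.indicator_of_mem hb]
    exact (mul_le_of_le_one_right' hle).trans le_self_add
  · have hX' : (insert b X).encard ≤ (m + 2 : ℕ) :=
      (Set.encard_insert_le X b).trans (by push_cast; grw [hX]; rw [add_assoc]; norm_num)
    rw [Set.indicator_of_notMem hb, zero_add,
      pathSum_top_of_neighborSet_eq T.ne₁₂ T.ne₁₃ T.ne₂₃ T.neighborSet_eq hb,
      pathSum_of_mem (u := w₁) (.inr h₁), zero_add]
    set P := fun w ↦ pathSum G s ⊤ w (insert b X)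
    calc t * pathSum (fisherBlack G c) t n T.corner₁ Y
        ≤ t * (1 + 2 * t + 2 * t ^ 2) +
            (t ^ 3 + t ^ 4) * (K (m + 2) * P w₂ + K (m + 2) * P w₃) :=
          T.mul_pathSum_corner₁_le h h₁' (fun Y' hY' ↦ ih _ _ _ _ hX' hY')
            (fun Y' hY' ↦ ih _ _ _ _ hX' hY')
      _ = t * (1 + 2 * t + 2 * t ^ 2) + (t ^ 3 + t ^ 4) * K (m + 2) * (P w₂ + P w₃) := by ring
      _ ≤ K m * s + K m * s ^ 2 * (P w₂ + P w₃) := by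
          grw [hK.mul_le_mul m, hK.mul_add_two_le m]
      _ = K m * (s * (1 + s * (P w₂ + P w₃))) := by ring

theorem IsComparisonFactor.pathSum_inl_le (hbip : ∀ u w : V, G.Adj u w → c u ≠ c w)
    (hcubic : ∀ v : V, c v = true → (G.neighborSet v).ncard = 3) {K : ℕ → ℝ≥0∞}
    (hK : IsComparisonFactor s t K) (n : ℕ) :
    ∀ (m : ℕ) (w : {v : V // c v = false}) (X : Set V) (Y : Set (FisherVertex G c)),
      X.encard ≤ m → Tracks Y X →
        pathSum (fisherBlack G c) t n (Sum.inl w) Y ≤ K m * pathSum G s ⊤ w X := by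
  induction n with
  | zero => simp [pathSum_zero]
  | succ n ih =>
    intro m w X Y hX h
    by_cases hw : w.1 ∈ X
    · simp [pathSum_of_mem ((h.inl_mem_iff w).2 hw)]
    set X' := insert w.1 X
    have hX' : X'.encard ≤ m + 1 := (Set.encard_insert_le X w).trans (by gcongr)
    have hdart (b : G.neighborSet w) :
        t * pathSum (fisherBlack G c) t n
            (dartVertex b.2.symm (black_of_adj_white hbip b.2.symm w.2)) (insert (Sum.inl w) Y) ≤
          X'.indicator (fun _ ↦ t) b + K m * (s * pathSum G s ⊤ b X') := by
      obtain ⟨w₂, w₃, T⟩ := exists_isTripod hbip hcubic b.2.symm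
        (black_of_adj_white hbip b.2.symm w.2)
      exact hK.mul_pathSum_corner₁_le ih T (h.insert_inl w) (Set.mem_insert w.1 X) hX'
    have hvisited : ∑' b : G.neighborSet w, X'.indicator (fun _ ↦ t) b.1 ≤ t * (m + 1) := calc
      ∑' b : G.neighborSet w, X'.indicator (fun _ ↦ t) b.1 ≤ ∑' b, X'.indicator (fun _ ↦ t) b :=
        ENNReal.tsum_comp_le_tsum_of_injective Subtype.val_injective _
      _ = X'.encard * t := by rw [← tsum_subtype, ENNReal.tsum_set_const]
      _ ≤ t * (m + 1) := by
        rw [mul_comm]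
        gcongr
        exact_mod_cast hX'
    rw [Nat.cast_succ, pathSum_succ ((h.inl_mem_iff w).not.2 hw),
      tsum_neighborSet_fisherBlack_inl hbip w fun x ↦
        pathSum (fisherBlack G c) t n x (insert (Sum.inl w) Y), pathSum_top hw,
      ← ENNReal.tsum_mul_left, ← ENNReal.tsum_mul_left, mul_add, ← ENNReal.tsum_mul_left, mul_one]
    grw [ENNReal.tsum_le_tsum hdart, ENNReal.tsum_add, hvisited, ← add_assoc, hK.one_add_mul_le]

theorem pathSum_fisherBlack_ne_top (hbip : ∀ u w : V, G.Adj u w → c u ≠ c w)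
    (hcubic : ∀ v : V, c v = true → (G.neighborSet v).ncard = 3) (hs : s ≠ ⊤)
    (hst : t ^ 3 + t ^ 4 < s ^ 2) (w : {v : V // c v = false}) (hw : pathSum G s ⊤ w ∅ ≠ ⊤) :
    pathSum (fisherBlack G c) t ⊤ (Sum.inl w) ∅ ≠ ⊤ := by
  obtain ⟨K, hK, hKtop⟩ := exists_isComparisonFactor hs hst
  refine ne_top_of_le_ne_top (ENNReal.mul_ne_top (hKtop 0) hw) ?_
  rw [pathSum_top_eq_iSup]
  exact iSup_le fun n ↦ hK.pathSum_inl_le hbip hcubic n 0 w ∅ ∅ (by simp) tracks_empty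

theorem mul_pathSum_le_mul_pathSum_corner₁ {κ : ℝ≥0∞} (hκs : κ * s ≤ t)
    (hst : s ^ 2 ≤ t ^ 3 + t ^ 4) {n : ℕ∞}
    (ih : ∀ (w : {v : V // c v = false}) (X : Set V) (Y : Set (FisherVertex G c)), Tracks Y X →
      κ * pathSum G s n w X ≤ pathSum (fisherBlack G c) t ⊤ (Sum.inl w) Y)
    {b w₁ w₂ w₃ : V} (T : IsTripod G c b w₁ w₂ w₃) {X : Set V} {Y : Set (FisherVertex G c)}
    (h : Tracks Y X) (h₁ : w₁ ∈ X) :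
    κ * (s * pathSum G s n b X) ≤ t * pathSum (fisherBlack G c) t ⊤ T.corner₁ Y := by
  by_cases hb : b ∈ X
  · simp [pathSum_of_mem hb]
  set P := fun w ↦ pathSum G s n w (insert b X)
  calc κ * (s * pathSum G s n b X) ≤ κ * (s * (1 + s * (0 + (P w₂ + P w₃)))) := by
        grw [pathSum_le_of_neighborSet_eq T.ne₁₂ T.ne₁₃ T.ne₂₃ T.neighborSet_eq,
          pathSum_of_mem (u := w₁) (.inr h₁)]
    _ = κ * s + s ^ 2 * (κ * P w₂ + κ * P w₃) := by ring
    _ ≤ t + (t ^ 3 + t ^ 4) * (κ * P w₂ + κ * P w₃) := by grw [hκs, hst]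
    _ ≤ t * pathSum (fisherBlack G c) t ⊤ T.corner₁ Y :=
        T.le_mul_pathSum_corner₁ h hb (fun Y' hY' ↦ ih ⟨w₂, T.white₂⟩ _ _ hY')
          (fun Y' hY' ↦ ih ⟨w₃, T.white₃⟩ _ _ hY')

theorem mul_pathSum_le_pathSum_inl (hbip : ∀ u w : V, G.Adj u w → c u ≠ c w)
    (hcubic : ∀ v : V, c v = true → (G.neighborSet v).ncard = 3) {κ : ℝ≥0∞} (hκs : κ * s ≤ t)
    (hκ : κ ≤ 1) (hst : s ^ 2 ≤ t ^ 3 + t ^ 4) (n : ℕ) :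
    ∀ (w : {v : V // c v = false}) (X : Set V) (Y : Set (FisherVertex G c)), Tracks Y X →
      κ * pathSum G s n w X ≤ pathSum (fisherBlack G c) t ⊤ (Sum.inl w) Y := by
  induction n with
  | zero => simp [pathSum_zero]
  | succ n ih =>
    intro w X Y h
    by_cases hw : w.1 ∈ X
    · simp [pathSum_of_mem hw]
    rw [Nat.cast_succ, pathSum_succ hw, pathSum_top ((h.inl_mem_iff w).not.2 hw),
      tsum_neighborSet_fisherBlack_inl hbip w fun x ↦
        pathSum (fisherBlack G c) t ⊤ x (insert (Sum.inl w) Y),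
      ← ENNReal.tsum_mul_left, ← ENNReal.tsum_mul_left, mul_add, ← ENNReal.tsum_mul_left, mul_one]
    refine add_le_add hκ (ENNReal.tsum_le_tsum fun b ↦ ?_)
    obtain ⟨w₂, w₃, T⟩ := exists_isTripod hbip hcubic b.2.symm
      (black_of_adj_white hbip b.2.symm w.2)
    exact mul_pathSum_le_mul_pathSum_corner₁ hκs hst ih T (h.insert_inl w)
      (Set.mem_insert w.1 X)

theorem pathSum_ne_top_of_fisherBlack (hbip : ∀ u w : V, G.Adj u w → c u ≠ c w)
    (hcubic : ∀ v : V, c v = true → (G.neighborSet v).ncard = 3) (hs : s ≠ ⊤) (ht : t ≠ 0)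
    (hst : s ^ 2 ≤ t ^ 3 + t ^ 4) (w : {v : V // c v = false})
    (hw : pathSum (fisherBlack G c) t ⊤ (Sum.inl w) ∅ ≠ ⊤) : pathSum G s ⊤ w ∅ ≠ ⊤ := by
  let κ := min 1 (t / s)
  have hκ : κ ≠ 0 := (lt_min one_pos (ENNReal.div_pos ht hs)).ne'
  have hκs : κ * s ≤ t := ENNReal.mul_le_of_le_div (min_le_right 1 (t / s))
  have hle : κ * pathSum G s ⊤ w ∅ ≤ pathSum (fisherBlack G c) t ⊤ (Sum.inl w) ∅ := by
    rw [pathSum_top_eq_iSup, ENNReal.mul_iSup]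
    exact iSup_le fun n ↦ mul_pathSum_le_pathSum_inl hbip hcubic hκs (min_le_left _ _) hst n w ∅ ∅
      tracks_empty
  exact fun htop ↦ hw (top_le_iff.1 (by simpa [htop, ENNReal.mul_top hκ] using hle))

end Comparison

theorem fisher_black_connective_constant_general {V : Type*} {G : SimpleGraph V} [Infinite V]
    (hconn : G.Connected) (hlf : ∀ v : V, (G.neighborSet v).Finite) {c : V → Bool}
    (hbip : ∀ u w : V, G.Adj u w → c u ≠ c w)
    (hcubic : ∀ v : V, c v = true → (G.neighborSet v).ncard = 3) {v : V} {x : FisherVertex G c}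
    {μ μt : ℝ} (hμ : Tendsto (fun n : ℕ ↦ (sawCount G v n : ℝ) ^ ((1 : ℝ) / n)) atTop (𝓝 μ))
    (hμt : Tendsto (fun n : ℕ ↦ (sawCount (fisherBlack G c) x n : ℝ) ^ ((1 : ℝ) / n)) atTop
      (𝓝 μt)) :
    1 / μ ^ 2 = (1 / μt) ^ 3 + (1 / μt) ^ 4 := by
  have hlft := finite_neighborSet_fisherBlack hlf hbip hcubic
  obtain ⟨w, hwx⟩ := exists_inl_reachable hbip x
  have hwv := hconn.preconnected w v
  have hμ0 : 0 < μ := one_pos.trans_le (one_le_of_tendsto_sawCount_rpow hconn hlf hμ)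
  have hμt0 : 0 ≤ μt := ge_of_tendsto' hμt fun n ↦ Real.rpow_nonneg (Nat.cast_nonneg _) _
  refine one_div_sq_eq_of_mul_le_one hμ0 hμt0 (fun s t hs ht hst h ↦ ?_) (fun s t hs ht hst h ↦ ?_)
  all_goals
    lift s to ℝ≥0 using hs.le
    lift t to ℝ≥0 using ht.le
    have hs' : (s : ℝ≥0∞) ≠ 0 := mod_cast hs.ne'
    have ht' : (t : ℝ≥0∞) ≠ 0 := mod_cast ht.ne'
  · refine mul_le_one_of_pathSum_ne_top hlf hμ (pathSum_ne_top_of_reachable hs' hwv ?_)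
    refine pathSum_ne_top_of_fisherBlack hbip hcubic ENNReal.coe_ne_top ht' (mod_cast hst) w ?_
    exact pathSum_ne_top_of_reachable ht' hwx.symm (pathSum_ne_top_of_mul_lt_one hlft hμt h)
  · refine mul_le_one_of_pathSum_ne_top hlft hμt (pathSum_ne_top_of_reachable ht' hwx ?_)
    refine pathSum_fisherBlack_ne_top hbip hcubic ENNReal.coe_ne_top (mod_cast hst) w ?_
    exact pathSum_ne_top_of_reachable hs' hwv.symm (pathSum_ne_top_of_mul_lt_one hlf hμ h)

/-- The semi-cubic Fisher transformation: if every black vertex of the bipartite graph `G`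
has degree 3, the connective constants of `G` and of its partial Fisher transform `G̃`
satisfy `1/μ² = (1/μ̃)³ + (1/μ̃)⁴`. -/
theorem fisher_black_connective_constant {V : Type*} (G : SimpleGraph V) [Infinite V]
    (hconn : G.Connected)
    (hlf : ∀ v : V, (G.neighborSet v).Finite)
    (c : V → Bool)
    (hbip : ∀ u w : V, G.Adj u w → c u ≠ c w)
    (hcubic : ∀ v : V, c v = true → (G.neighborSet v).ncard = 3)
    (hqt : ∃ W : Finset V, ∀ v : V, ∃ w ∈ W, ∃ γ : G ≃g G,
      (∀ u : V, c (γ u) = c u) ∧ γ v = w)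
    (v : V) (x : {v : V // c v = false} ⊕ {d : G.Dart // c d.toProd.1 = true})
    (μ μt : ℝ)
    (hμ : Tendsto (fun n : ℕ => (sawCount G v n : ℝ) ^ ((1 : ℝ) / n)) atTop (nhds μ))
    (hμt : Tendsto (fun n : ℕ => (sawCount (fisherBlack G c) x n : ℝ) ^ ((1 : ℝ) / n))
      atTop (nhds μt)) :
    1 / μ ^ 2 = (1 / μt) ^ 3 + (1 / μt) ^ 4 :=
  fisher_black_connective_constant_general hconn hlf hbip hcubic hμ hμt
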